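/- Let r ≥ 1 and m ≥ 0 be integers. In the field K = 𝕜(x₁,…,x_r) of rational functions over a field 𝕜 of characteristic zero, the following identity holds: x_r^{−m−1} + ∑_{i=1}^{r−1} (Dᵢ⁺ ∘ D_{i+1}⁺ ∘ ⋯ ∘ D_{r−1}⁺)(x_r^{−m−1}) = δ_{m,0} − ∑_{(p₁,…,p_r)} ∏_{i : pᵢ > 0} (−xᵢ^{−pᵢ}), where the right-hand sum is over all tuples (p₁,…,p_r) of nonnegative integers satisfying p₁ + ⋯ + p_r + #{i : pᵢ = 0} = m + r, the product over those indices i with pᵢ > 0 (an empty product being 1), and δ_{m,0} equals 1 if m = 0 and 0 otherwise. -/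

import Mathlib

noncomputable section

open MvPolynomial

/-- The `i`-th variable `xᵢ`, regarded as an element of the field `K` of rational
functions (the fraction field of `MvPolynomial (Fin r) 𝕜`). -/
def ratVar (𝕜 : Type*) [Field 𝕜] (n : ℕ) (K : Type*) [Field K]
    [Algebra (MvPolynomial (Fin n) 𝕜) K] (i : Fin n) : K :=
  algebraMap (MvPolynomial (Fin n) 𝕜) K (X i)

/-- The `𝕜`-linear operator `f ↦ s f + (f - s f) * c⁻¹` (that is, `s + ∂` where
`∂ f = (f - s f)/c`). -/
def demazurePlusAux (𝕜 : Type*) [Field 𝕜] (K : Type*) [Field K] [Algebra 𝕜 K]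
    (s : K ≃ₐ[𝕜] K) (c : K) : Module.End 𝕜 K :=
  s.toLinearMap + (LinearMap.mulRight 𝕜 c⁻¹) ∘ₗ ((LinearMap.id : K →ₗ[𝕜] K) - s.toLinearMap)

/-- The operator `Dᵢ⁺ = sᵢ + ∂ᵢ` (0-indexed variables). -/
def DPlus (𝕜 : Type*) [Field 𝕜] {n : ℕ} (K : Type*) [Field K] [Algebra 𝕜 K]
    [Algebra (MvPolynomial (Fin n) 𝕜) K]
    (s : Equiv.Perm (Fin n) → (K ≃ₐ[𝕜] K)) (i : ℕ) (hi : i + 1 < n) : Module.End 𝕜 K :=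
  demazurePlusAux 𝕜 K (s (Equiv.swap ⟨i, Nat.lt_of_succ_lt hi⟩ ⟨i + 1, hi⟩))
    (ratVar 𝕜 n K ⟨i + 1, hi⟩ - ratVar 𝕜 n K ⟨i, Nat.lt_of_succ_lt hi⟩)

/-- The operator `Dᵢ⁺`, extended by the identity for indices `i` out of range (it is
only ever used below for in-range indices). -/
def DPlusTotal (𝕜 : Type*) [Field 𝕜] {n : ℕ} (K : Type*) [Field K] [Algebra 𝕜 K]
    [Algebra (MvPolynomial (Fin n) 𝕜) K]
    (s : Equiv.Perm (Fin n) → (K ≃ₐ[𝕜] K)) (i : ℕ) : Module.End 𝕜 K :=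
  if hi : i + 1 < n then DPlus 𝕜 K s i hi else 1

/-!
Write `A x = 1 / (x - T)`, a power series in `T` whose coefficient of `T ^ m` is `x⁻ᵐ⁻¹`, and
extend the operators `Dᵢ⁺` coefficientwise to `K⟦T⟧`. Since `A y - A x = -(y - x) * A x * A y`,
for every `sᵢ`-invariant series `G` one has `Dᵢ⁺ (A xᵢ₊₁ * G) = A xᵢ * (1 - A xᵢ₊₁) * G`.
Iterating from `A x_r`, the `i`-th summand becomes `A xᵢ * ∏ j > i, (1 - A xⱼ)`, and these add up
to `1 - ∏ j, (1 - A xⱼ)`. In the expansion of this product, `pⱼ = 0` stands for the `1` in the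
factor `1 - A xⱼ`, and `pⱼ > 0` for the term `-xⱼ ^ (-pⱼ) * T ^ (pⱼ - 1)`.
-/

section Expansion

open PowerSeries (invUnitsSub)

variable {R ι : Type*} [CommRing R]

theorem invUnitsSub_sub_invUnitsSub (u v : Rˣ) :
    invUnitsSub u - invUnitsSub v =
      PowerSeries.C ((v : R) - u) * (invUnitsSub u * invUnitsSub v) := by
  rw [map_sub]
  linear_combination invUnitsSub v * PowerSeries.invUnitsSub_mul_sub u -
    invUnitsSub u * PowerSeries.invUnitsSub_mul_sub v

theorem map_prod_one_sub_invUnitsSub {f : R →+* R} {u : ι → Rˣ} {t : Finset ι}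
    (hf : ∀ i ∈ t, f (u i) = u i) :
    PowerSeries.map f (∏ i ∈ t, (1 - invUnitsSub (u i))) = ∏ i ∈ t, (1 - invUnitsSub (u i)) := by
  rw [map_prod]
  refine Finset.prod_congr rfl fun i hi => ?_
  have hfix : Units.map (f : R →* R) (u i) = u i := Units.ext (hf i hi)
  rw [map_sub, map_one, PowerSeries.map_invUnitsSub, hfix]

theorem prod_one_sub_eq_one_sub_sum_mul_prod_gt [LinearOrder ι] (s : Finset ι) (f : ι → R) :
    ∏ i ∈ s, (1 - f i) = 1 - ∑ i ∈ s, f i * ∏ j ∈ s with i < j, (1 - f j) :=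
  Finset.prod_one_sub_ordered (ι := ιᵒᵈ) s f

theorem coeff_prod_congr {S : Type*} [CommSemiring S] {s : Finset ι} {f g : ι → PowerSeries S}
    {m : ℕ} (h : ∀ i ∈ s, ∀ e ≤ m, PowerSeries.coeff e (f i) = PowerSeries.coeff e (g i)) :
    PowerSeries.coeff m (∏ i ∈ s, f i) = PowerSeries.coeff m (∏ i ∈ s, g i) := by
  classical
  rw [PowerSeries.coeff_prod, PowerSeries.coeff_prod]
  refine Finset.sum_congr rfl fun l hl => Finset.prod_congr rfl fun i hi => h i hi _ ?_
  rw [← (Finset.mem_finsuppAntidiag.mp hl).1]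
  exact Finset.single_le_sum (fun _ _ => Nat.zero_le _) hi

theorem coeff_one_sub_invUnitsSub_eq_coeff_sum_monomial (u : Rˣ) {e N : ℕ} (he : e < N) :
    PowerSeries.coeff e (1 - invUnitsSub u) =
      PowerSeries.coeff e (∑ p : Fin (N + 1), PowerSeries.monomial ((p : ℕ) - 1)
        (if 0 < (p : ℕ) then -(↑(u ^ (p : ℕ))⁻¹ : R) else 1)) := by
  rw [Fin.sum_univ_eq_sum_range (fun p => PowerSeries.monomial (p - 1)
    (if 0 < p then -(↑(u ^ p)⁻¹ : R) else 1)), Finset.sum_range_succ', map_add, map_sum, map_sub,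
    PowerSeries.coeff_invUnitsSub, one_divp, PowerSeries.coeff_one]
  simp [PowerSeries.coeff_monomial, he, sub_eq_neg_add]

theorem coeff_prod_one_sub_invUnitsSub [Fintype ι] [DecidableEq ι] (u : ι → Rˣ) {m N : ℕ}
    (hm : m < N) :
    PowerSeries.coeff m (∏ i, (1 - invUnitsSub (u i))) =
      ∑ p : ι → Fin (N + 1) with ∑ i, ((p i : ℕ) - 1) = m,
        ∏ i with 0 < (p i : ℕ), -(↑(u i ^ (p i : ℕ))⁻¹ : R) := by
  rw [coeff_prod_congr fun i _ e he =>
      coeff_one_sub_invUnitsSub_eq_coeff_sum_monomial (u i) (he.trans_lt hm),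
    Finset.prod_univ_sum, map_sum, Fintype.piFinset_univ, Finset.sum_filter]
  refine Finset.sum_congr rfl fun p _ => ?_
  rw [PowerSeries.prod_monomial, PowerSeries.coeff_monomial, Finset.prod_filter]
  exact if_congr eq_comm rfl rfl

theorem sum_sub_one_add_card [Fintype ι] (p : ι → ℕ) :
    ∑ i, (p i - 1) + Fintype.card ι = ∑ i, p i + (Finset.univ.filter fun i => p i = 0).card := by
  rw [Finset.card_filter, Fintype.card_eq_sum_ones, ← Finset.sum_add_distrib,
    ← Finset.sum_add_distrib]
  refine Finset.sum_congr rfl fun i _ => ?_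
  split_ifs <;> omega

end Expansion

section Demazure

open PowerSeries (invUnitsSub)

variable {𝕜 : Type*} [Field 𝕜] {K : Type*} [Field K] [Algebra 𝕜 K]

theorem demazurePlusAux_coeff_invUnitsSub_mul (s : K ≃ₐ[𝕜] K) {x y : Kˣ} (hxy : (x : K) ≠ y)
    (hs : s y = x) {G : PowerSeries K} (hG : PowerSeries.map (s : K →+* K) G = G) (m : ℕ) :
    demazurePlusAux 𝕜 K s (y - x) (PowerSeries.coeff m (invUnitsSub y * G)) =
      PowerSeries.coeff m (invUnitsSub x * ((1 - invUnitsSub y) * G)) := by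
  have hcoeff : s (PowerSeries.coeff m (invUnitsSub y * G)) =
      PowerSeries.coeff m (invUnitsSub x * G) := by
    have hyx : Units.map ((s : K →+* K) : K →* K) y = x := Units.ext hs
    have hmap : PowerSeries.map (s : K →+* K) (invUnitsSub y * G) = invUnitsSub x * G := by
      rw [map_mul, hG, PowerSeries.map_invUnitsSub, hyx]
    rw [← hmap, PowerSeries.coeff_map, RingHom.coe_coe]
  have hdiff : PowerSeries.coeff m (invUnitsSub y * G) - PowerSeries.coeff m (invUnitsSub x * G) =
      (x - y) * PowerSeries.coeff m (invUnitsSub y * invUnitsSub x * G) := by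
    rw [← map_sub, ← sub_mul, invUnitsSub_sub_invUnitsSub, mul_assoc, PowerSeries.coeff_C_mul]
  have hquot : (PowerSeries.coeff m (invUnitsSub y * G) -
      PowerSeries.coeff m (invUnitsSub x * G)) * ((y : K) - x)⁻¹ =
        -PowerSeries.coeff m (invUnitsSub y * invUnitsSub x * G) := by
    have hne : (y : K) - x ≠ 0 := sub_ne_zero.mpr hxy.symm
    rw [hdiff]
    field_simp
    ring
  simp only [demazurePlusAux, LinearMap.add_apply, LinearMap.comp_apply, LinearMap.sub_apply,
    LinearMap.id_apply, AlgEquiv.toLinearMap_apply, LinearMap.mulRight_apply, hcoeff, hquot]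
  rw [← map_neg, ← map_add]
  congr 1
  ring

variable {r : ℕ} [Algebra (MvPolynomial (Fin r) 𝕜) K] {s : Equiv.Perm (Fin r) → (K ≃ₐ[𝕜] K)}
  {u : Fin r → Kˣ}

theorem DPlus_coeff_invUnitsSub_mul_prod (hu : ∀ i, (u i : K) = ratVar 𝕜 r K i)
    (hinj : Function.Injective (ratVar 𝕜 r K))
    (hs : ∀ (σ : Equiv.Perm (Fin r)) (i : Fin r), s σ (ratVar 𝕜 r K i) = ratVar 𝕜 r K (σ i))
    {i j : Fin r} (hi : (i : ℕ) + 1 < r) (hij : i < j) (m : ℕ) :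
    DPlus 𝕜 K s i hi (PowerSeries.coeff m
        (invUnitsSub (u ⟨i + 1, hi⟩) * ∏ k ∈ Finset.Ioc ⟨i + 1, hi⟩ j, (1 - invUnitsSub (u k)))) =
      PowerSeries.coeff m (invUnitsSub (u i) * ∏ k ∈ Finset.Ioc i j, (1 - invUnitsSub (u k))) := by
  have hIoc : Finset.Ioc i j = insert ⟨i + 1, hi⟩ (Finset.Ioc ⟨i + 1, hi⟩ j) := by
    ext k
    simp only [Finset.mem_Ioc, Finset.mem_insert, Fin.lt_def, Fin.le_def, Fin.ext_iff] at hij ⊢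
    omega
  have hne : (u i : K) ≠ u ⟨i + 1, hi⟩ := by
    rw [hu, hu, hinj.ne_iff]
    simp [Fin.ext_iff]
  have hswap : s (Equiv.swap i ⟨i + 1, hi⟩) (u ⟨i + 1, hi⟩) = u i := by
    rw [hu, hu, hs, Equiv.swap_apply_right]
  have hfix : ∀ k ∈ Finset.Ioc ⟨i + 1, hi⟩ j, s (Equiv.swap i ⟨i + 1, hi⟩) (u k) = u k := by
    intro k hk
    have hlt : (i : ℕ) + 1 < k := (Finset.mem_Ioc.mp hk).1
    rw [hu, hs, Equiv.swap_apply_of_ne_of_ne] <;> simp only [ne_eq, Fin.ext_iff] <;> omega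
  rw [hIoc, Finset.prod_insert Finset.left_notMem_Ioc, DPlus, ← hu, ← hu]
  exact demazurePlusAux_coeff_invUnitsSub_mul _ hne hswap (map_prod_one_sub_invUnitsSub hfix) m

theorem DPlusTotal_chain_coeff_invUnitsSub (hu : ∀ i, (u i : K) = ratVar 𝕜 r K i)
    (hinj : Function.Injective (ratVar 𝕜 r K))
    (hs : ∀ (σ : Equiv.Perm (Fin r)) (i : Fin r), s σ (ratVar 𝕜 r K i) = ratVar 𝕜 r K (σ i))
    {i j : Fin r} (hij : i ≤ j) (m : ℕ) :
    ((List.range (j - i : ℕ)).map fun t => DPlusTotal 𝕜 K s (i + t)).prod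
        (PowerSeries.coeff m (invUnitsSub (u j))) =
      PowerSeries.coeff m (invUnitsSub (u i) * ∏ k ∈ Finset.Ioc i j, (1 - invUnitsSub (u k))) := by
  obtain ⟨d, hd⟩ : ∃ d, (j - i : ℕ) = d := ⟨_, rfl⟩
  induction d generalizing i with
  | zero =>
    obtain rfl : i = j := le_antisymm hij (Nat.sub_eq_zero_iff_le.mp hd)
    simp
  | succ d ih =>
    have hlt : i < j := Fin.lt_def.mpr (by omega)
    have hi : (i : ℕ) + 1 < r := by omega
    have hd' : (j - (⟨i + 1, hi⟩ : Fin r) : ℕ) = d := by simp only; omega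
    have htail := ih (i := ⟨i + 1, hi⟩) hlt hd'
    rw [hd'] at htail
    simp only [hd, List.range_succ_eq_map, List.map_cons, List.map_map, List.prod_cons,
      Function.comp_def, Nat.succ_eq_add_one, ← add_assoc, add_right_comm _ _ 1, add_zero,
      Module.End.mul_apply]
    rw [htail, DPlusTotal, dif_pos hi]
    exact DPlus_coeff_invUnitsSub_mul_prod hu hinj hs hi hlt m

theorem sum_DPlusTotal_chain_coeff_invUnitsSub {n : ℕ} [Algebra (MvPolynomial (Fin (n + 1)) 𝕜) K]
    {s : Equiv.Perm (Fin (n + 1)) → (K ≃ₐ[𝕜] K)} {u : Fin (n + 1) → Kˣ}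
    (hu : ∀ i, (u i : K) = ratVar 𝕜 (n + 1) K i)
    (hinj : Function.Injective (ratVar 𝕜 (n + 1) K))
    (hs : ∀ (σ : Equiv.Perm (Fin (n + 1))) (i : Fin (n + 1)),
      s σ (ratVar 𝕜 (n + 1) K i) = ratVar 𝕜 (n + 1) K (σ i)) (m : ℕ) :
    ∑ i ∈ Finset.range (n + 1),
        ((List.range (n - i)).map fun t => DPlusTotal 𝕜 K s (i + t)).prod
          (PowerSeries.coeff m (invUnitsSub (u (Fin.last n)))) =
      PowerSeries.coeff m (1 - ∏ i, (1 - invUnitsSub (u i))) := by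
  rw [prod_one_sub_eq_one_sub_sum_mul_prod_gt, sub_sub_cancel, map_sum, Finset.sum_range]
  refine Finset.sum_congr rfl fun i _ => ?_
  have hgt : Finset.univ.filter (i < ·) = Finset.Ioc i (Fin.last n) := by
    ext k
    simp [Fin.le_last]
  rw [hgt]
  exact DPlusTotal_chain_coeff_invUnitsSub hu hinj hs (Fin.le_last i) m

end Demazure

section Variables

variable (𝕜 : Type*) [Field 𝕜] (n : ℕ) (K : Type*) [Field K] [Algebra (MvPolynomial (Fin n) 𝕜) K]
  [FaithfulSMul (MvPolynomial (Fin n) 𝕜) K]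

theorem ratVar_injective : Function.Injective (ratVar 𝕜 n K) :=
  (FaithfulSMul.algebraMap_injective (MvPolynomial (Fin n) 𝕜) K).comp X_injective

theorem ratVar_ne_zero (i : Fin n) : ratVar 𝕜 n K i ≠ 0 :=
  (FaithfulSMul.algebraMap_eq_zero_iff _ K).not.mpr (X_ne_zero i)

end Variables

theorem DPlus_chain_sum_on_inverse_power_general
    (𝕜 : Type*) [Field 𝕜] (n m : ℕ)
    (K : Type*) [Field K] [Algebra 𝕜 K] [Algebra (MvPolynomial (Fin (n + 1)) 𝕜) K]
    (hinj : Function.Injective (ratVar 𝕜 (n + 1) K)) (hne : ∀ i, ratVar 𝕜 (n + 1) K i ≠ 0)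
    (s : Equiv.Perm (Fin (n + 1)) → (K ≃ₐ[𝕜] K))
    (hs : ∀ (σ : Equiv.Perm (Fin (n + 1))) (i : Fin (n + 1)),
      s σ (ratVar 𝕜 (n + 1) K i) = ratVar 𝕜 (n + 1) K (σ i)) :
    (ratVar 𝕜 (n + 1) K (Fin.last n) ^ (m + 1))⁻¹ +
      ∑ i ∈ Finset.range n,
        (((List.range (n - i)).map fun t => DPlusTotal 𝕜 K s (i + t)).prod)
          ((ratVar 𝕜 (n + 1) K (Fin.last n) ^ (m + 1))⁻¹) =
    (if m = 0 then (1 : K) else 0) -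
      ∑ p ∈ Finset.univ.filter (fun p : Fin (n + 1) → Fin (m + (n + 1) + 1) =>
          (∑ i, (p i : ℕ)) + (Finset.univ.filter fun i : Fin (n + 1) => (p i : ℕ) = 0).card
            = m + (n + 1)),
        ∏ i ∈ Finset.univ.filter fun i : Fin (n + 1) => 0 < (p i : ℕ),
          -(ratVar 𝕜 (n + 1) K i ^ (p i : ℕ))⁻¹ := by
  let u : Fin (n + 1) → Kˣ := fun i => Units.mk0 (ratVar 𝕜 (n + 1) K i) (hne i)
  have hpow (i : Fin (n + 1)) (e : ℕ) :
      (↑(u i ^ e)⁻¹ : K) = (ratVar 𝕜 (n + 1) K i ^ e)⁻¹ := by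
    rw [Units.val_inv_eq_inv_val, Units.val_pow_eq_pow_val, Units.val_mk0]
  have hlast : (ratVar 𝕜 (n + 1) K (Fin.last n) ^ (m + 1))⁻¹ =
      PowerSeries.coeff m (PowerSeries.invUnitsSub (u (Fin.last n))) := by
    rw [PowerSeries.coeff_invUnitsSub, one_divp, hpow]
  have hchain := sum_DPlusTotal_chain_coeff_invUnitsSub (u := u) (fun _ => rfl) hinj hs m
  rw [Finset.sum_range_succ, Nat.sub_self, List.range_zero, List.map_nil, List.prod_nil,
    Module.End.one_apply, add_comm, ← hlast, map_sub, PowerSeries.coeff_one,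
    coeff_prod_one_sub_invUnitsSub u (show m < m + (n + 1) by omega)] at hchain
  have hdegree (p : Fin (n + 1) → Fin (m + (n + 1) + 1)) :
      ∑ i, ((p i : ℕ) - 1) = m ↔
        ∑ i, (p i : ℕ) + (Finset.univ.filter fun i => (p i : ℕ) = 0).card = m + (n + 1) := by
    rw [← sum_sub_one_add_card fun i => (p i : ℕ), Fintype.card_fin, Nat.add_right_cancel_iff]
  simp only [hdegree, hpow] at hchain
  exact hchain

/-- For `r ≥ 1`, `m ≥ 0`, in `K = 𝕜(x₁,…,x_r)`:
`x_r^{−m−1} + ∑_{i=1}^{r−1} (Dᵢ⁺ ∘ ⋯ ∘ D_{r−1}⁺)(x_r^{−m−1})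
  = δ_{m,0} − ∑_{(p₁,…,p_r)} ∏_{i : pᵢ>0} (−xᵢ^{−pᵢ})`,
the sum being over tuples of nonnegative integers with
`p₁ + ⋯ + p_r + #{i : pᵢ = 0} = m + r` (every such tuple has all entries `≤ m + r`, so
they are faithfully enumerated by the filtered finite set below); everything here is
`0`-indexed, and the composite `Dᵢ⁺ ∘ ⋯ ∘ D_{r−1}⁺` is the `List.prod` (= composition)
of the indicated operators. -/
theorem DPlus_chain_sum_on_inverse_power
    (𝕜 : Type*) [Field 𝕜] [CharZero 𝕜] (r m : ℕ) (hr : 1 ≤ r)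
    (K : Type*) [Field K] [Algebra 𝕜 K] [Algebra (MvPolynomial (Fin r) 𝕜) K]
    [IsScalarTower 𝕜 (MvPolynomial (Fin r) 𝕜) K]
    [IsFractionRing (MvPolynomial (Fin r) 𝕜) K]
    (s : Equiv.Perm (Fin r) → (K ≃ₐ[𝕜] K))
    (hs : ∀ (σ : Equiv.Perm (Fin r)) (i : Fin r), s σ (ratVar 𝕜 r K i) = ratVar 𝕜 r K (σ i)) :
    (ratVar 𝕜 r K ⟨r - 1, by omega⟩ ^ (m + 1))⁻¹ +
      ∑ i ∈ Finset.range (r - 1),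
        (((List.range (r - 1 - i)).map fun t => DPlusTotal 𝕜 K s (i + t)).prod)
          ((ratVar 𝕜 r K ⟨r - 1, by omega⟩ ^ (m + 1))⁻¹) =
    (if m = 0 then (1 : K) else 0) -
      ∑ p ∈ Finset.univ.filter (fun p : Fin r → Fin (m + r + 1) =>
          (∑ i, (p i : ℕ)) + (Finset.univ.filter fun i : Fin r => (p i : ℕ) = 0).card
            = m + r),
        ∏ i ∈ Finset.univ.filter fun i : Fin r => 0 < (p i : ℕ),
          -(ratVar 𝕜 r K i ^ (p i : ℕ))⁻¹ := by
  obtain ⟨n, rfl⟩ := Nat.exists_eq_add_of_le' hr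
  exact DPlus_chain_sum_on_inverse_power_general 𝕜 n m K (ratVar_injective 𝕜 _ K)
    (ratVar_ne_zero 𝕜 _ K) s hs
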